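/- arXiv:2311.13823 — 2 statements merged into one kernel-verified Lean document; each statement's English description precedes it below -/
import Mathlib

section
/- The sequences ℓ ↦ β_{3ℓ+1} and ℓ ↦ β_{3ℓ+2} (ℓ ∈ ℕ, ℓ ≥ 1) are both strictly decreasing and both converge, as ℓ → ∞, to the base β_a ∈ (1,2] whose quasi-greedy expansion of 1 is 101(001)^∞ (β_a ≈ 1.55898). -/
open Filter Set

noncomputable section

namespace FatSierpinski

/-- The digit set Ω = {(0,0),(1,0),(0,1)} ⊆ ℝ². -/
def OmegaR : Set (ℝ × ℝ) := {(0, 0), (1, 0), (0, 1)}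

/-- The fat Sierpinski gasket `S_β` (sequences are 0-indexed: `d i` is the digit d_{i+1}). -/
def Sfat (β : ℝ) : Set (ℝ × ℝ) :=
  {x | ∃ d : ℕ → ℝ × ℝ, (∀ i, d i ∈ OmegaR) ∧ x = ∑' i : ℕ, (β ^ (i + 1))⁻¹ • d i}

/-- The convex hull `Δ_β` of `S_β`. -/
def Delta (β : ℝ) : Set (ℝ × ℝ) := convexHull ℝ (Sfat β)

/-- The map `f_d(x) = (x + d)/β`. -/
def fmap (β : ℝ) (d : ℝ × ℝ) (x : ℝ × ℝ) : ℝ × ℝ := β⁻¹ • (x + d)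

/-- The overlap region `O_β = ⋃_{c ≠ d ∈ Ω} f_c(Δ_β) ∩ f_d(Δ_β)`. -/
def Ofat (β : ℝ) : Set (ℝ × ℝ) :=
  ⋃ c ∈ OmegaR, ⋃ d ∈ OmegaR, ⋃ (_ : c ≠ d), (fmap β c '' Delta β) ∩ (fmap β d '' Delta β)

/-- The univoque set of codings `𝐔_β`. -/
def Ufat (β : ℝ) : Set (ℕ → ℝ × ℝ) :=
  {d | (∀ i, d i ∈ OmegaR) ∧
    ∀ n : ℕ, (∑' i : ℕ, (β ^ (i + 1))⁻¹ • d (n + i)) ∉ Ofat β}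

/-- `d` has smallest period `k`. -/
def SmallestPeriod {α : Type*} (d : ℕ → α) (k : ℕ) : Prop :=
  0 < k ∧ (∀ i, d (i + k) = d i) ∧ ∀ j, 0 < j → j < k → ∃ i, d (i + j) ≠ d i

/-- The critical base `β_k`. -/
def betaK (k : ℕ) : ℝ :=
  sInf {β : ℝ | β ∈ Set.Ioc (1 : ℝ) 2 ∧ ∃ d ∈ Ufat β, SmallestPeriod d k}

/-- Strict lexicographic order on sequences. -/
def seqLT {α : Type*} [Preorder α] (a b : ℕ → α) : Prop :=
  ∃ n, (∀ i < n, a i = b i) ∧ a n < b n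

/-- Weak lexicographic order on sequences. -/
def seqLE {α : Type*} [Preorder α] (a b : ℕ → α) : Prop :=
  seqLT a b ∨ a = b

/-- `a` is a 0-1 sequence. -/
def IsBinary (a : ℕ → ℕ) : Prop := ∀ i, a i ≤ 1

/-- `a` does not end with `0^∞`. -/
def NotEndInZeros (a : ℕ → ℕ) : Prop := ∀ N, ∃ i, N ≤ i ∧ a i ≠ 0

/-- `∑_{i=1}^∞ a_i β^{-i} = 1` (0-indexed: `a i` is a_{i+1}). -/
def SumsToOne (β : ℝ) (a : ℕ → ℕ) : Prop :=
  ∑' i : ℕ, (a i : ℝ) / β ^ (i + 1) = 1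

/-- `a` is the quasi-greedy β-expansion of 1: the lexicographically largest
binary sequence not ending in `0^∞` whose value in base β is 1. -/
def IsQuasiGreedy (β : ℝ) (a : ℕ → ℕ) : Prop :=
  IsBinary a ∧ NotEndInZeros a ∧ SumsToOne β a ∧
    ∀ b : ℕ → ℕ, IsBinary b → NotEndInZeros b → SumsToOne β b → seqLE b a

/-- `w⁺`: replace the final digit 0 of a block by 1. -/
def plusBlock (w : List ℕ) : List ℕ := w.dropLast ++ [1]

/-- `Θ` flips the outer digits of every consecutive triple
(000↦101, 001↦100, 100↦001, 101↦000). -/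
def thetaBlock (w : List ℕ) : List ℕ :=
  w.mapIdx fun i x => if i % 3 = 1 then x else 1 - x

/-- `tB n` is the block `t_{n+1}`: `t_1 = 100`, `t_{n+1} = t_n⁺ Θ(t_n⁺)`. -/
def tB : ℕ → List ℕ
  | 0 => [1, 0, 0]
  | n + 1 => plusBlock (tB n) ++ thetaBlock (plusBlock (tB n))

/-- The sequence `u w^∞` (the block `u` followed by `w` repeated forever). -/
def prefixPeriodic (u w : List ℕ) : ℕ → ℕ := fun i =>
  if i < u.length then u.getD i 0 else w.getD ((i - u.length) % w.length) 0

/-- The periodic sequence `w^∞`. -/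
def periodicSeq (w : List ℕ) : ℕ → ℕ := fun i => w.getD (i % w.length) 0

/-- The componentwise limit `λ = 101001000101…` of the blocks `t_n`
(the digit `λ_{i+1}` has stabilized in `t_{i+2} = tB (i+1)`). -/
def lamSeq : ℕ → ℕ := fun i => (tB (i + 1)).getD i 0

/-- `β_c` is the unique base in (1,2] with `∑ λ_i β^{-i} = 1`. -/
def IsBetaC (β : ℝ) : Prop := β ∈ Set.Ioc (1 : ℝ) 2 ∧ SumsToOne β lamSeq

/-- The sequence `t_{n+2}⁺ (Θ(t_{n+2}))^∞`, the quasi-greedy expansion of 1 for `β̂_n`. -/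
def hatSeq (n : ℕ) : ℕ → ℕ :=
  prefixPeriodic (plusBlock (tB (n + 1))) (thetaBlock (tB (n + 1)))

/-- The Sharkovskii ordering `k ⊳ ℓ` on positive integers. -/
def Sharkovskii (k l : ℕ) : Prop :=
  ∃ a b c d : ℕ, k = 2 ^ a * (2 * b + 1) ∧ l = 2 ^ c * (2 * d + 1) ∧ k ≠ l ∧
    ((1 ≤ b ∧ d = 0) ∨ (1 ≤ b ∧ 1 ≤ d ∧ (a < c ∨ (a = c ∧ b < d))) ∨
      (b = 0 ∧ d = 0 ∧ c < a))

/-- The digit set Ω as pairs of naturals (for combinatorial statements). -/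
def OmegaD : Set (ℕ × ℕ) := {(0, 0), (1, 0), (0, 1)}

/-- The periodic extension `(d_1 … d_k)^∞` of a block. -/
def cyc (d : List (ℕ × ℕ)) : ℕ → ℕ × ℕ := fun i => d.getD (i % d.length) (0, 0)

/-- Strict lexicographic order on lists. -/
def listLT (u v : List ℕ) : Prop := List.Lex (· < ·) u v

/-- Weak lexicographic order on lists. -/
def listLE (u v : List ℕ) : Prop := listLT u v ∨ u = v

/-- The first components `d_1¹ … d_k¹` of a block over Ω. -/
def comp1 (d : List (ℕ × ℕ)) : List ℕ := d.map Prod.fst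

/-- The second components `d_1² … d_k²` of a block over Ω. -/
def comp2 (d : List (ℕ × ℕ)) : List ℕ := d.map Prod.snd

/-- The digits `(1 - d_1⁺) … (1 - d_k⁺)` where `d⁺ = d¹ + d²`. -/
def comp3 (d : List (ℕ × ℕ)) : List ℕ := d.map fun x => 1 - x.1 - x.2

/-- Cyclic shift of a list by `j`. -/
def rot {α : Type*} (j : ℕ) (l : List α) : List α := l.drop j ++ l.take j

/-- `d` is a representation of the binary block `a`. -/
def IsRepresentation (a : List ℕ) (d : List (ℕ × ℕ)) : Prop :=
  d.length = a.length ∧ (∀ x ∈ d, x ∈ OmegaD) ∧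
  SmallestPeriod (cyc d) a.length ∧
  comp1 d = a ∧ listLE (comp3 d) (comp2 d) ∧ listLE (comp2 d) a ∧
  ∀ j < a.length,
    listLE (comp1 (rot j d)) a ∧ listLE (comp2 (rot j d)) a ∧ listLE (comp3 (rot j d)) a

/-- A binary block is admissible if it has a representation. -/
def IsAdmissible (a : List ℕ) : Prop := ∃ d, IsRepresentation a d

/-- The `i`-th consecutive triple of a block (0-indexed). -/
def tripleAt (a : List ℕ) (i : ℕ) : List ℕ :=
  [a.getD (3 * i) 0, a.getD (3 * i + 1) 0, a.getD (3 * i + 2) 0]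

/-- The edges of the directed graph on {000, 001, 100, 101} defining the subshift `X`. -/
def XEdge (u v : List ℕ) : Prop :=
  (u, v) ∈ ({([1,0,1], [0,0,1]), ([1,0,1], [0,0,0]), ([0,0,1], [0,0,0]),
             ([0,0,0], [1,0,1]), ([0,0,0], [1,0,0]), ([1,0,0], [1,0,1])} :
      Set (List ℕ × List ℕ))



/-- Value of a digit sequence in base `β`. -/
def val (β : ℝ) (s : ℕ → ℝ) : ℝ := ∑' i : ℕ, (β ^ (i + 1))⁻¹ * s i

lemma geoS {β : ℝ} (hβ : 1 < β) : HasSum (fun i : ℕ => (β ^ (i + 1))⁻¹) (1 / (β - 1)) := by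
  have h := (hasSum_geometric_of_lt_one (r := β⁻¹) (by positivity) (inv_lt_one_of_one_lt₀ hβ)).mul_left β⁻¹
  have e1 : (fun i : ℕ => (β ^ (i + 1))⁻¹) = fun i => β⁻¹ * β⁻¹ ^ i := by
    funext i; rw [pow_succ, mul_inv, inv_pow, mul_comm]
  have e2 : 1 / (β - 1) = β⁻¹ * (1 - β⁻¹)⁻¹ := by
    have : β - 1 ≠ 0 := by linarith
    have : β ≠ 0 := by linarith
    field_simp
  rw [e1, e2]; exact h

lemma sumS {β : ℝ} (hβ : 1 < β) {s : ℕ → ℝ} (hs : ∀ i, 0 ≤ s i ∧ s i ≤ 1) :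
    Summable (fun i : ℕ => (β ^ (i + 1))⁻¹ * s i) := by
  refine Summable.of_nonneg_of_le (fun i => ?_) (fun i => ?_) (geoS hβ).summable
  · have := (hs i).1; positivity
  · have h1 : 0 ≤ (β ^ (i + 1))⁻¹ := by positivity
    have := mul_le_mul_of_nonneg_left (hs i).2 h1
    linarith

lemma val_nonneg {β : ℝ} (hβ : 1 < β) {s : ℕ → ℝ} (hs : ∀ i, 0 ≤ s i ∧ s i ≤ 1) : 0 ≤ val β s := by
  refine tsum_nonneg (fun i => ?_)
  have := (hs i).1; positivity

lemma val_step {β : ℝ} (hβ : 1 < β) {s : ℕ → ℝ} (hs : ∀ i, 0 ≤ s i ∧ s i ≤ 1) (n : ℕ) :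
    β * val β (fun i => s (n + i)) = s n + val β (fun i => s (n + 1 + i)) := by
  have hb : β ≠ 0 := by linarith
  unfold val
  rw [Summable.tsum_eq_zero_add (sumS hβ (fun i => hs (n + i))), mul_add, ← tsum_mul_left]
  congr 1
  · simp [hb]
  · congr 1; ext i
    rw [show n + (i + 1) = n + 1 + i by ring, pow_succ β (i + 1), mul_inv]
    field_simp

lemma sumP {β : ℝ} (hβ : 1 < β) {s : ℕ → ℝ} (hs : ∀ i, 0 ≤ s i ∧ s i ≤ 1) :
    Summable (fun i : ℕ => (β ^ i)⁻¹ * ∑ j ∈ Finset.range i, s j) := by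
  have h := summable_pow_mul_geometric_of_norm_lt_one (R := ℝ) 1 (r := β⁻¹)
    (by rw [Real.norm_of_nonneg (by positivity)]; exact inv_lt_one_of_one_lt₀ hβ)
  refine Summable.of_nonneg_of_le (fun i => ?_) (fun i => ?_) h
  · have := Finset.sum_nonneg (s := Finset.range i) (fun j _ => (hs j).1); positivity
  · have h1 : 0 ≤ (β ^ i)⁻¹ := by positivity
    have h2 : ∑ j ∈ Finset.range i, s j ≤ i := by
      have := Finset.sum_le_sum (s := Finset.range i) (fun j _ => (hs j).2)
      simpa using this
    have := mul_le_mul_of_nonneg_left h2 h1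
    rw [inv_pow, pow_one]; linarith

lemma val_abel {β : ℝ} (hβ : 1 < β) {s : ℕ → ℝ} (hs : ∀ i, 0 ≤ s i ∧ s i ≤ 1) :
    val β s = (1 - β⁻¹) * ∑' i : ℕ, (β ^ i)⁻¹ * ∑ j ∈ Finset.range i, s j := by
  have hP := sumP hβ hs
  have hP1 := (summable_nat_add_iff 1).2 hP
  have e : ∀ i : ℕ, (β ^ (i + 1))⁻¹ * s i =
      (β ^ (i + 1))⁻¹ * (∑ j ∈ Finset.range (i + 1), s j) -
        β⁻¹ * ((β ^ i)⁻¹ * ∑ j ∈ Finset.range i, s j) := by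
    intro i; rw [Finset.sum_range_succ, pow_succ, mul_inv]; ring
  have h0 := hP.tsum_eq_zero_add
  simp only [Finset.range_zero, Finset.sum_empty, mul_zero, zero_add] at h0
  unfold val
  simp_rw [e]
  rw [hP1.tsum_sub (hP.mul_left _), tsum_mul_left, ← h0]
  ring

lemma val_le {β : ℝ} (hβ : 1 < β) {s c : ℕ → ℝ} (hs : ∀ i, 0 ≤ s i ∧ s i ≤ 1)
    (hc : ∀ i, 0 ≤ c i ∧ c i ≤ 1)
    (h : ∀ m, ∑ j ∈ Finset.range m, s j ≤ ∑ j ∈ Finset.range m, c j) : val β s ≤ val β c := by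
  rw [val_abel hβ hs, val_abel hβ hc]
  have : β⁻¹ < 1 := inv_lt_one_of_one_lt₀ hβ
  refine mul_le_mul_of_nonneg_left ?_ (by linarith)
  refine (sumP hβ hs).tsum_le_tsum (fun i => ?_) (sumP hβ hc)
  exact mul_le_mul_of_nonneg_left (h i) (by positivity)

lemma val_lt {β : ℝ} (hβ : 1 < β) {s c : ℕ → ℝ} (hs : ∀ i, 0 ≤ s i ∧ s i ≤ 1)
    (hc : ∀ i, 0 ≤ c i ∧ c i ≤ 1)
    (h : ∀ m, ∑ j ∈ Finset.range m, s j ≤ ∑ j ∈ Finset.range m, c j)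
    (m : ℕ) (hm : ∑ j ∈ Finset.range m, s j < ∑ j ∈ Finset.range m, c j) : val β s < val β c := by
  rw [val_abel hβ hs, val_abel hβ hc]
  have : β⁻¹ < 1 := inv_lt_one_of_one_lt₀ hβ
  refine mul_lt_mul_of_pos_left ?_ (by linarith)
  refine Summable.tsum_lt_tsum (i := m) (fun i => ?_) ?_ (sumP hβ hs) (sumP hβ hc)
  · exact mul_le_mul_of_nonneg_left (h i) (by positivity)
  · exact mul_lt_mul_of_pos_left hm (by positivity)

lemma val_anti {β γ : ℝ} (hβ : 1 < β) (hg : β ≤ γ) {s : ℕ → ℝ} (hs : ∀ i, 0 ≤ s i ∧ s i ≤ 1) :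
    val γ s ≤ val β s := by
  refine (sumS (by linarith) hs).tsum_le_tsum (fun i => ?_) (sumS hβ hs)
  refine mul_le_mul_of_nonneg_right ?_ (hs i).1
  gcongr

lemma val_anti_lt {β γ : ℝ} (hβ : 1 < β) (hg : β < γ) {s : ℕ → ℝ} (hs : ∀ i, 0 ≤ s i ∧ s i ≤ 1)
    (h0 : s 0 = 1) : val γ s < val β s := by
  refine Summable.tsum_lt_tsum (i := 0) (fun i => ?_) ?_ (sumS (by linarith) hs) (sumS hβ hs)
  · refine mul_le_mul_of_nonneg_right ?_ (hs i).1
    gcongr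
  · simp only [h0, zero_add, pow_one, mul_one]
    gcongr

lemma val_two {s : ℕ → ℝ} (hs : ∀ i, 0 ≤ s i ∧ s i ≤ 1) (h1 : s 1 = 0) : val 2 s < 1 := by
  have h := geoS (β := 2) (by norm_num)
  have e : (1 : ℝ) = ∑' i : ℕ, ((2 : ℝ) ^ (i + 1))⁻¹ := by rw [h.tsum_eq]; norm_num
  rw [e]
  refine Summable.tsum_lt_tsum (i := 1) (fun i => ?_) ?_ (sumS (by norm_num) hs) h.summable
  · have h1 : (0 : ℝ) ≤ (2 ^ (i + 1))⁻¹ := by positivity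
    have := mul_le_mul_of_nonneg_left (hs i).2 h1
    linarith
  · simp [h1]

lemma val_cont {s : ℕ → ℝ} (hs : ∀ i, 0 ≤ s i ∧ s i ≤ 1) {b : ℝ} (hb : 1 < b) :
    ContinuousAt (fun β => val β s) b := by
  obtain ⟨r, hr1, hrb⟩ := exists_between hb
  have : ContinuousOn (fun β => val β s) (Set.Ioi r) := by
    unfold val
    refine continuousOn_tsum (u := fun i => (r ^ (i + 1))⁻¹) (fun i => ?_) (geoS hr1).summable ?_
    · refine ContinuousOn.mul (ContinuousOn.inv₀ (by fun_prop) ?_) continuousOn_const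
      intro x hx
      have : 0 < x := by have := Set.mem_Ioi.1 hx; linarith
      positivity
    · intro i x hx
      have hx : r < x := hx
      have hx0 : 0 < x := by linarith
      have h1 : (0 : ℝ) ≤ (x ^ (i + 1))⁻¹ := by positivity
      rw [Real.norm_of_nonneg (mul_nonneg h1 (hs i).1)]
      have := mul_le_mul_of_nonneg_left (hs i).2 h1
      calc _ ≤ (x ^ (i + 1))⁻¹ := by linarith
        _ ≤ _ := by gcongr
  exact this.continuousAt (Ioi_mem_nhds hrb)

lemma OmegaR_bd {v : ℝ × ℝ} (h : v ∈ OmegaR) :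
    v = (0, 0) ∨ v = (1, 0) ∨ v = (0, 1) := by
  simpa [OmegaR] using h

lemma tsum_pair {β : ℝ} (hβ : 1 < β) {d : ℕ → ℝ × ℝ} (hd : ∀ i, d i ∈ OmegaR) :
    (∑' i : ℕ, (β ^ (i + 1))⁻¹ • d i) = (val β (fun i => (d i).1), val β (fun i => (d i).2)) := by
  have h1 : ∀ i, 0 ≤ (d i).1 ∧ (d i).1 ≤ 1 := fun i => by
    rcases OmegaR_bd (hd i) with h | h | h <;> simp [h]
  have h2 : ∀ i, 0 ≤ (d i).2 ∧ (d i).2 ≤ 1 := fun i => by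
    rcases OmegaR_bd (hd i) with h | h | h <;> simp [h]
  have := (sumS hβ h1).hasSum.prodMk (sumS hβ h2).hasSum
  exact this.tsum_eq

lemma val_third {β : ℝ} (hβ : 1 < β) {d : ℕ → ℝ × ℝ} (hd : ∀ i, d i ∈ OmegaR) :
    val β (fun i => 1 - (d i).1 - (d i).2) =
      1 / (β - 1) - val β (fun i => (d i).1) - val β (fun i => (d i).2) := by
  have h1 : ∀ i, 0 ≤ (d i).1 ∧ (d i).1 ≤ 1 := fun i => by
    rcases OmegaR_bd (hd i) with h | h | h <;> simp [h]
  have h2 : ∀ i, 0 ≤ (d i).2 ∧ (d i).2 ≤ 1 := fun i => by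
    rcases OmegaR_bd (hd i) with h | h | h <;> simp [h]
  have := ((geoS hβ).sub (sumS hβ h1).hasSum).sub (sumS hβ h2).hasSum
  unfold val
  rw [← this.tsum_eq]
  congr 1; ext i; ring

lemma Delta_eq {β : ℝ} (hβ : 1 < β) (p : ℝ × ℝ) :
    p ∈ Delta β ↔ 0 ≤ p.1 ∧ 0 ≤ p.2 ∧ p.1 + p.2 ≤ 1 / (β - 1) := by
  have hR : 0 < 1 / (β - 1) := by apply one_div_pos.2; linarith
  constructor
  · intro hp
    have hc : Convex ℝ {p : ℝ × ℝ | 0 ≤ p.1 ∧ 0 ≤ p.2 ∧ p.1 + p.2 ≤ 1 / (β - 1)} := by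
      rintro ⟨x1, x2⟩ ⟨h1, h2, h3⟩ ⟨y1, y2⟩ ⟨g1, g2, g3⟩ a b ha hb hab
      simp only [Set.mem_ofPred_eq, Prod.smul_mk, Prod.mk_add_mk, smul_eq_mul] at *
      refine ⟨by positivity, by positivity, ?_⟩
      have e : 1 / (β - 1) = a * (1 / (β - 1)) + b * (1 / (β - 1)) := by rw [← add_mul, hab, one_mul]
      rw [e]
      nlinarith [mul_le_mul_of_nonneg_left h3 ha, mul_le_mul_of_nonneg_left g3 hb]
    refine convexHull_min ?_ hc hp
    rintro x ⟨d, hd, rfl⟩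
    rw [tsum_pair hβ hd]
    have h1 : ∀ i, 0 ≤ (d i).1 ∧ (d i).1 ≤ 1 := fun i => by
      rcases OmegaR_bd (hd i) with h | h | h <;> simp [h]
    have h2 : ∀ i, 0 ≤ (d i).2 ∧ (d i).2 ≤ 1 := fun i => by
      rcases OmegaR_bd (hd i) with h | h | h <;> simp [h]
    have h3 : ∀ i, 0 ≤ 1 - (d i).1 - (d i).2 ∧ 1 - (d i).1 - (d i).2 ≤ 1 := fun i => by
      rcases OmegaR_bd (hd i) with h | h | h <;> simp [h]
    have := val_third hβ hd
    have h4 := val_nonneg hβ h3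
    exact ⟨val_nonneg hβ h1, val_nonneg hβ h2, by simp only; linarith⟩
  · rintro ⟨h1, h2, h3⟩
    have key : ∀ c ∈ OmegaR, (1 / (β - 1)) • c ∈ Delta β := by
      intro c hc
      refine subset_convexHull ℝ _ ⟨fun _ => c, fun _ => hc, ?_⟩
      rw [← (geoS hβ).tsum_eq]
      exact ((geoS hβ).summable.tsum_smul_const c).symm
    have hconv : Convex ℝ (Delta β) := convex_convexHull ℝ _
    have k0 := key (0, 0) (by simp [OmegaR])
    have k1 := key (1, 0) (by simp [OmegaR])
    have k2 := key (0, 1) (by simp [OmegaR])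
    set R := 1 / (β - 1)
    have := hconv.sum_mem (t := Finset.univ) (w := ![1 - p.1 / R - p.2 / R, p.1 / R, p.2 / R])
      (z := ![R • ((0 : ℝ), (0 : ℝ)), R • ((1 : ℝ), (0 : ℝ)), R • ((0 : ℝ), (1 : ℝ))]) ?_ ?_ ?_
    · convert this using 1
      simp only [Fin.sum_univ_three]
      ext <;> simp <;> field_simp
    · intro i _
      fin_cases i
      · have : p.1 / R + p.2 / R ≤ 1 := by rw [← add_div]; exact (div_le_one hR).2 h3
        simp; linarith
      · simp; positivity
      · simp; positivity
    · simp [Fin.sum_univ_three]; ring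
    · intro i _
      fin_cases i
      · exact k0
      · exact k1
      · exact k2

lemma fmap_image {β : ℝ} (hβ : 1 < β) (c p : ℝ × ℝ) :
    p ∈ fmap β c '' Delta β ↔
      c.1 ≤ β * p.1 ∧ c.2 ≤ β * p.2 ∧ β * p.1 + β * p.2 - c.1 - c.2 ≤ 1 / (β - 1) := by
  have hb : β ≠ 0 := by linarith
  constructor
  · rintro ⟨x, hx, rfl⟩
    obtain ⟨h1, h2, h3⟩ := (Delta_eq hβ x).1 hx
    simp only [fmap, Prod.smul_fst, Prod.smul_snd, Prod.fst_add, Prod.snd_add, smul_eq_mul]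
    rw [mul_inv_cancel_left₀ hb, mul_inv_cancel_left₀ hb]
    refine ⟨by linarith, by linarith, by linarith⟩
  · rintro ⟨h1, h2, h3⟩
    refine ⟨β • p - c, (Delta_eq hβ _).2 ⟨?_, ?_, ?_⟩, ?_⟩
    · simp; linarith
    · simp; linarith
    · simp only [Prod.smul_fst, Prod.smul_snd, Prod.fst_sub, Prod.snd_sub, smul_eq_mul]; linarith
    · simp [fmap, hb]

lemma Ufat_iff {β : ℝ} (hβ : 1 < β) {d : ℕ → ℝ × ℝ} (hd : ∀ i, d i ∈ OmegaR) :
    d ∈ Ufat β ↔ ∀ n, ((d n).1 = 0 → val β (fun i => (d (n + 1 + i)).1) < 1) ∧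
      ((d n).2 = 0 → val β (fun i => (d (n + 1 + i)).2) < 1) ∧
      (1 - (d n).1 - (d n).2 = 0 →
        val β (fun i => 1 - (d (n + 1 + i)).1 - (d (n + 1 + i)).2) < 1) := by
  have h1 : ∀ i, 0 ≤ (d i).1 ∧ (d i).1 ≤ 1 := fun i => by
    rcases OmegaR_bd (hd i) with h | h | h <;> simp [h]
  have h2 : ∀ i, 0 ≤ (d i).2 ∧ (d i).2 ≤ 1 := fun i => by
    rcases OmegaR_bd (hd i) with h | h | h <;> simp [h]
  have h3 : ∀ i, 0 ≤ 1 - (d i).1 - (d i).2 ∧ 1 - (d i).1 - (d i).2 ≤ 1 := fun i => by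
    rcases OmegaR_bd (hd i) with h | h | h <;> simp [h]
  simp only [Ufat, Set.mem_ofPred_eq, hd, implies_true, true_and]
  refine forall_congr' fun n => ?_
  rw [tsum_pair hβ (d := fun i => d (n + i)) (fun i => hd _)]
  have s1 := val_step hβ h1 n
  have s2 := val_step hβ h2 n
  have t3 := val_third hβ (d := fun i => d (n + 1 + i)) (fun i => hd _)
  have p1 := val_nonneg hβ (s := fun i => (d (n + 1 + i)).1) (fun i => h1 _)
  have p2 := val_nonneg hβ (s := fun i => (d (n + 1 + i)).2) (fun i => h2 _)
  have p3 := val_nonneg hβ (s := fun i => 1 - (d (n + 1 + i)).1 - (d (n + 1 + i)).2) (fun i => h3 _)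
  simp only [Ofat, Set.mem_iUnion, Set.mem_inter_iff, fmap_image hβ, s1, s2, exists_prop, not_exists,
    not_and]
  rw [t3] at p3 ⊢
  generalize val β (fun i => (d (n + 1 + i)).1) = X at *
  generalize val β (fun i => (d (n + 1 + i)).2) = Y at *
  generalize 1 / (β - 1) = R at *
  constructor
  · intro H
    rcases OmegaR_bd (hd n) with h | h | h
    · have A := H (0,0) (by simp [OmegaR]) (1,0) (by simp [OmegaR]) (by simp)
      have B := H (0,0) (by simp [OmegaR]) (0,1) (by simp [OmegaR]) (by simp)
      simp only [h] at A B ⊢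
      refine ⟨fun _ => ?_, fun _ => ?_, fun hh => ?_⟩
      · by_contra hc
        exact A ⟨by linarith, by linarith, by linarith⟩ (by linarith) (by linarith) (by linarith)
      · by_contra hc
        exact B ⟨by linarith, by linarith, by linarith⟩ (by linarith) (by linarith) (by linarith)
      · norm_num at hh
    · have A := H (1,0) (by simp [OmegaR]) (0,0) (by simp [OmegaR]) (by simp)
      have B := H (1,0) (by simp [OmegaR]) (0,1) (by simp [OmegaR]) (by simp)
      simp only [h] at A B ⊢
      refine ⟨fun hh => ?_, fun _ => ?_, fun hh => ?_⟩
      · norm_num at hh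
      · by_contra hc
        exact B ⟨by linarith, by linarith, by linarith⟩ (by linarith) (by linarith) (by linarith)
      · by_contra hc
        exact A ⟨by linarith, by linarith, by linarith⟩ (by linarith) (by linarith) (by linarith)
    · have A := H (0,1) (by simp [OmegaR]) (0,0) (by simp [OmegaR]) (by simp)
      have B := H (0,1) (by simp [OmegaR]) (1,0) (by simp [OmegaR]) (by simp)
      simp only [h] at A B ⊢
      refine ⟨fun hh => ?_, fun hh => ?_, fun hh => ?_⟩
      · by_contra hc
        exact B ⟨by linarith, by linarith, by linarith⟩ (by linarith) (by linarith) (by linarith)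
      · norm_num at hh
      · by_contra hc
        exact A ⟨by linarith, by linarith, by linarith⟩ (by linarith) (by linarith) (by linarith)
  · rintro ⟨A, B, C⟩ c hc e he hne ⟨a1, a2, a3⟩ b1 b2 b3
    rcases OmegaR_bd (hd n) with h | h | h <;> rw [h] at A B C a1 a2 a3 b1 b2 b3 <;>
      norm_num at A B C <;>
      rcases OmegaR_bd hc with h' | h' | h' <;> rcases OmegaR_bd he with h'' | h'' | h'' <;>
      subst h' <;> subst h'' <;> simp only at a1 a2 a3 b1 b2 b3 <;>
      first
        | exact hne rfl
        | linarith

/-- `⌈i N / k⌉`. -/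
def cS (N k i : ℕ) : ℕ := (i * N + (k - 1)) / k

lemma cS_le {N k i n : ℕ} (hk : 0 < k) : cS N k i ≤ n ↔ i * N ≤ n * k := by
  unfold cS
  rw [← Nat.lt_succ_iff, Nat.div_lt_iff_lt_mul hk, Nat.succ_mul]
  omega

lemma cS_ge {N k i : ℕ} (hk : 0 < k) : i * N ≤ cS N k i * k := (cS_le hk).1 le_rfl

lemma cS_lt {N k i : ℕ} (hk : 0 < k) : cS N k i * k < i * N + k := by
  have := Nat.div_mul_le_self (i * N + (k - 1)) k
  unfold cS; omega

lemma cS_zero {N k : ℕ} (hk : 0 < k) : cS N k 0 = 0 := by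
  have := (cS_le (N := N) (i := 0) (n := 0) hk).2 (by simp)
  omega

lemma cS_add_le {N k : ℕ} (hk : 0 < k) (m n : ℕ) : cS N k (m + n) ≤ cS N k m + cS N k n := by
  rw [cS_le hk, add_mul, add_mul]
  exact add_le_add (cS_ge hk) (cS_ge hk)

lemma cS_mono {N k : ℕ} (hk : 0 < k) (m n : ℕ) : cS N k m ≤ cS N k (m + n) := by
  rw [cS_le hk]
  have := cS_ge (N := N) (i := m + n) hk
  rw [add_mul] at this
  omega

lemma cS_one {N k : ℕ} (hk : 0 < k) (h : N ≤ k) : cS N k 1 ≤ 1 := by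
  rw [cS_le hk]; omega

lemma cS_per {N k : ℕ} (hk : 0 < k) (i : ℕ) : cS N k (i + k) = cS N k i + N := by
  unfold cS
  rw [show (i + k) * N + (k - 1) = i * N + (k - 1) + k * N by ring, Nat.add_mul_div_left _ _ hk]

lemma cS_three {N k : ℕ} (hk : 0 < k) (h : k ≤ 3 * N) (i : ℕ) :
    cS N k i + 1 ≤ cS N k (i + 3) := by
  by_contra hc
  have h1 : cS N k (i + 3) ≤ cS N k i := by omega
  rw [cS_le hk] at h1
  have := cS_lt (N := N) (i := i) hk
  rw [add_mul] at h1
  omega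

lemma cS_third {N k : ℕ} (hk : 0 < k) (h : k ≤ 3 * N) (m : ℕ) : (m + 2) / 3 ≤ cS N k m := by
  have h1 := cS_ge (N := N) (i := m) hk
  have h2 : m * N ≤ (3 * cS N k m) * N := by
    calc m * N ≤ cS N k m * k := h1
      _ ≤ cS N k m * (3 * N) := Nat.mul_le_mul_left _ h
      _ = _ := by ring
  have := Nat.le_of_mul_le_mul_right h2 (by omega)
  omega

/-- Digits of the upper mechanical word of slope `N/k`. -/
def cD (N k i : ℕ) : ℝ := (cS N k (i + 1) : ℝ) - cS N k i

lemma cD_bd {N k : ℕ} (hk : 0 < k) (h : N ≤ k) (i : ℕ) : 0 ≤ cD N k i ∧ cD N k i ≤ 1 := by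
  have h1 := cS_mono (N := N) hk i 1
  have h2 := cS_add_le (N := N) hk i 1
  have h3 := cS_one hk h
  have h4 : cS N k (i + 1) ≤ cS N k i + 1 := by omega
  unfold cD
  constructor
  · have : (cS N k i : ℝ) ≤ cS N k (i + 1) := by exact_mod_cast h1
    linarith
  · have : (cS N k (i + 1) : ℝ) ≤ cS N k i + 1 := by exact_mod_cast h4
    linarith

lemma cD_sum {N k : ℕ} (hk : 0 < k) (m : ℕ) : ∑ j ∈ Finset.range m, cD N k j = cS N k m := by
  unfold cD
  rw [Finset.sum_range_sub (fun i => (cS N k i : ℝ)), cS_zero hk]; simp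

lemma sum_window (F : ℕ → ℕ) (n m : ℕ) :
    ∑ j ∈ Finset.range m, ((F (n + j + 1) : ℝ) - F (n + j)) = F (n + m) - F n := by
  have := Finset.sum_range_sub (fun i => (F (n + i) : ℝ)) m
  simpa [add_assoc] using this

lemma three_window {F : ℕ → ℕ} (hm : ∀ n, F n ≤ F (n + 1)) (h3 : ∀ n, F (n + 3) ≤ F n + 1)
    (n m : ℕ) : F (n + m) ≤ F n + (m + 2) / 3 := by
  induction m using Nat.strong_induction_on with
  | _ m ih =>
    rcases m with _ | _ | _ | m
    · simp
    · have a := hm (n + 1); have b := hm (n + 2); have c := h3 n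
      simp only [add_assoc] at *; norm_num at *; omega
    · have a := hm (n + 1); have b := hm (n + 2); have c := h3 n
      simp only [add_assoc] at *; norm_num at *; omega
    · have a := ih m (by omega)
      have b := h3 (n + m)
      rw [show n + (m + 1 + 1 + 1) = n + m + 3 by ring]
      omega

lemma mem_of_counts {β : ℝ} (hβ : 1 < β) {N k : ℕ} (hk : 0 < k) (hN : N ≤ k)
    (hv : val β (cD N k) < 1) {X Y Z : ℕ → ℕ}
    (hX : ∀ i, X i ≤ X (i + 1)) (hY : ∀ i, Y i ≤ Y (i + 1)) (hZ : ∀ i, Z i ≤ Z (i + 1))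
    (hs : ∀ i, X i + Y i + Z i = i)
    (wX : ∀ n m, X (n + m) ≤ X n + cS N k m) (wY : ∀ n m, Y (n + m) ≤ Y n + cS N k m)
    (wZ : ∀ n m, Z (n + m) ≤ Z n + cS N k m) :
    (fun i => (((X (i + 1) : ℝ) - X i, (Y (i + 1) : ℝ) - Y i) : ℝ × ℝ)) ∈ Ufat β := by
  have key : ∀ F : ℕ → ℕ, (∀ i, F i ≤ F (i + 1)) → (∀ i, F (i + 1) ≤ F i + 1) →
      (∀ n m, F (n + m) ≤ F n + cS N k m) → ∀ n,
      val β (fun i => (F (n + i + 1) : ℝ) - F (n + i)) < 1 := by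
    intro F h1 h2 h3 n
    refine lt_of_le_of_lt (val_le hβ (fun i => ?_) (cD_bd hk hN) (fun m => ?_)) hv
    · have a : (F (n + i) : ℝ) ≤ F (n + i + 1) := by exact_mod_cast h1 (n + i)
      have b : (F (n + i + 1) : ℝ) ≤ F (n + i) + 1 := by exact_mod_cast h2 (n + i)
      constructor <;> linarith
    · rw [cD_sum hk, sum_window]
      have : (F (n + m) : ℝ) ≤ F n + cS N k m := by exact_mod_cast h3 n m
      linarith
  have hZr : ∀ i, (1 : ℝ) - ((X (i + 1) : ℝ) - X i) - ((Y (i + 1) : ℝ) - Y i) = Z (i + 1) - Z i := by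
    intro i
    have a : (X i : ℝ) + Y i + Z i = i := by exact_mod_cast hs i
    have b : (X (i + 1) : ℝ) + Y (i + 1) + Z (i + 1) = i + 1 := by exact_mod_cast hs (i + 1)
    linarith
  have kX := key X hX (fun i => by have := hY i; have := hZ i; have := hs i; have := hs (i + 1); omega) wX
  have kY := key Y hY (fun i => by have := hX i; have := hZ i; have := hs i; have := hs (i + 1); omega) wY
  have kZ := key Z hZ (fun i => by have := hX i; have := hY i; have := hs i; have := hs (i + 1); omega) wZ
  rw [Ufat_iff hβ]
  · intro n
    refine ⟨fun _ => kX (n + 1), fun _ => kY (n + 1), fun _ => ?_⟩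
    simp only [hZr]
    exact kZ (n + 1)
  · intro i
    have a := hX i; have b := hY i; have c := hZ i; have e := hs i; have f := hs (i + 1)
    have : (X (i + 1) = X i ∧ Y (i + 1) = Y i) ∨ (X (i + 1) = X i + 1 ∧ Y (i + 1) = Y i) ∨
      (X (i + 1) = X i ∧ Y (i + 1) = Y i + 1) := by omega
    rcases this with ⟨h, h'⟩ | ⟨h, h'⟩ | ⟨h, h'⟩ <;> simp [OmegaR, h, h']

lemma per_of_counts {k j M : ℕ} {F : ℕ → ℕ} (hF : ∀ i, F (i + k) = F i + M)
    (hc : Nat.Coprime k M) (hj : ∀ i, (F (i + j + 1) : ℝ) - F (i + j) = F (i + 1) - F i) : k ∣ j := by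
  have h1 : ∀ i, (F (i + j) : ℤ) - F i = F j - F 0 := by
    intro i
    induction i with
    | zero => simp
    | succ i ih =>
      have h : (F (i + j + 1) : ℤ) - F (i + j) = F (i + 1) - F i := by exact_mod_cast hj i
      rw [show i + 1 + j = i + j + 1 by ring]
      linarith
  have h2 : ∀ m : ℕ, (F (m * j) : ℤ) - F 0 = m * (F j - F 0) := by
    intro m
    induction m with
    | zero => simp
    | succ m ih =>
      have := h1 (m * j)
      rw [show (m + 1) * j = m * j + j by ring]
      push_cast; linarith
  have h3 : ∀ m : ℕ, (F (m * k) : ℤ) - F 0 = m * M := by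
    intro m
    induction m with
    | zero => simp
    | succ m ih =>
      have := hF (m * k)
      rw [show (m + 1) * k = m * k + k by ring, this]
      push_cast; linarith
  have h4 := h2 k
  rw [mul_comm k j, h3 j] at h4
  have : (k : ℤ) ∣ ((j * M : ℕ) : ℤ) := ⟨_, by push_cast; exact h4⟩
  exact hc.dvd_of_dvd_mul_right (Int.natCast_dvd_natCast.1 this)

lemma upperA {β : ℝ} (hβ : 1 < β) {l : ℕ} (hl : 1 ≤ l) (hv : val β (cD (l + 1) (3 * l + 1)) < 1) :
    ∃ d ∈ Ufat β, SmallestPeriod d (3 * l + 1) := by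
  set N := l + 1 with hN
  set k := 3 * l + 1 with hkd
  have hk : 0 < k := by omega
  set X := cS N k with hXd
  have x1 : ∀ i, X i ≤ X (i + 1) := fun i => cS_mono hk i 1
  have x2 : ∀ i, X (i + 1) ≤ X i + 1 := fun i => by
    have := cS_add_le (N := N) hk i 1; have := cS_one (N := N) hk (by omega)
    simp only [hXd]; omega
  have x3 : ∀ i, X i + 1 ≤ X (i + 3) := fun i => cS_three hk (by omega) i
  have x0 : X 0 = 0 := cS_zero hk
  have xi : ∀ i, X i ≤ i := by
    intro i
    induction i with
    | zero => omega
    | succ i ih => have := x2 i; omega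
  have xk : ∀ i, X (i + k) = X i + N := cS_per hk
  have w : ∀ F : ℕ → ℕ, (∀ i, F i ≤ F (i + 1)) → (∀ i, F (i + 3) ≤ F i + 1) →
      ∀ n m, F (n + m) ≤ F n + cS N k m := fun F h1 h2 n m => by
    have := three_window h1 h2 n m
    have := cS_third (N := N) hk (by omega) m
    omega
  set Y : ℕ → ℕ := fun i => (i - X i + 1) / 2 with hYd
  set Z : ℕ → ℕ := fun i => (i - X i) / 2 with hZd
  have yk : ∀ i, Y (i + k) = Y i + l := by
    intro i; have := xk i; have := xi i; simp only [hYd]; omega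
  refine ⟨_, mem_of_counts hβ hk (by omega) hv (X := X) (Y := Y) (Z := Z) x1 ?_ ?_ ?_ ?_ ?_ ?_, hk, ?_, ?_⟩
  · intro i; have := x2 i; have := xi i; have := xi (i + 1); simp only [hYd]; omega
  · intro i; have := x2 i; have := xi i; have := xi (i + 1); simp only [hZd]; omega
  · intro i; have := xi i; simp only [hYd, hZd]; omega
  · intro n m; exact cS_add_le hk n m
  · refine w Y ?_ ?_
    · intro i; have := x2 i; have := xi i; have := xi (i + 1); simp only [hYd]; omega
    · intro i; have := x3 i; have := xi i; have := xi (i + 3); simp only [hYd]; omega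
  · refine w Z ?_ ?_
    · intro i; have := x2 i; have := xi i; have := xi (i + 1); simp only [hZd]; omega
    · intro i; have := x3 i; have := xi i; have := xi (i + 3); simp only [hZd]; omega
  · intro i
    simp only
    rw [show i + k + 1 = i + 1 + k by ring, xk, xk, yk, yk]
    ext <;> push_cast <;> ring
  · intro j hj hjk
    by_contra hc
    push Not at hc
    have : k ∣ j := by
      refine per_of_counts yk ?_ (fun i => congrArg Prod.snd (hc i))
      rw [hkd, mul_comm]; simp
    exact absurd (Nat.le_of_dvd hj this) (by omega)

lemma upperB {β : ℝ} (hβ : 1 < β) {l : ℕ} (hv : val β (cD (l + 1) (3 * l + 2)) < 1) :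
    ∃ d ∈ Ufat β, SmallestPeriod d (3 * l + 2) := by
  set N := l + 1 with hN
  set k := 3 * l + 2 with hkd
  have hk : 0 < k := by omega
  set X := cS N k with hXd
  have x1 : ∀ i, X i ≤ X (i + 1) := fun i => cS_mono hk i 1
  have x2 : ∀ i, X (i + 2) ≤ X i + 1 := fun i => by
    have := cS_add_le (N := N) hk i 2
    have : cS N k 2 ≤ 1 := by rw [cS_le hk]; omega
    simp only [hXd]; omega
  have x3 : ∀ i, X i + 1 ≤ X (i + 3) := fun i => cS_three hk (by omega) i
  have x0 : X 0 = 0 := cS_zero hk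
  have x11 : X 1 = 1 := by
    have := cS_one (N := N) hk (by omega)
    have h3 := cS_third (N := N) hk (by omega) 1
    have : cS N k 1 = X 1 := rfl
    omega
  have xp : ∀ i, 1 ≤ X (i + 1) := by
    intro i
    induction i with
    | zero => simp only [zero_add]; omega
    | succ i ih => have := x1 (i + 1); omega
  have xi : ∀ i, X i + X (i + 1) ≤ i + 1 := by
    intro i
    induction i with
    | zero => simp only [zero_add]; omega
    | succ i ih => have := x2 i; rw [show i + 1 + 1 = i + 2 by ring]; omega
  have xk : ∀ i, X (i + k) = X i + N := cS_per hk
  have w : ∀ F : ℕ → ℕ, (∀ i, F i ≤ F (i + 1)) → (∀ i, F (i + 3) ≤ F i + 1) →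
      ∀ n m, F (n + m) ≤ F n + cS N k m := fun F h1 h2 n m => by
    have := three_window h1 h2 n m
    have := cS_third (N := N) hk (by omega) m
    omega
  set Y : ℕ → ℕ := fun i => X (i + 1) - 1 with hYd
  set Z : ℕ → ℕ := fun i => i + 1 - X i - X (i + 1) with hZd
  have yk : ∀ i, Y (i + k) = Y i + N := by
    intro i; have := xk (i + 1); have := xp i; simp only [hYd]
    rw [show i + k + 1 = i + 1 + k by ring]; omega
  have z1 : ∀ i, Z i ≤ Z (i + 1) := by
    intro i; have := x2 i; have := xi i; have := xi (i + 1); simp only [hZd]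
    rw [show i + 1 + 1 = i + 2 by ring] at *; omega
  refine ⟨_, mem_of_counts hβ hk (by omega) hv (X := X) (Y := Y) (Z := Z) x1 ?_ z1 ?_ ?_ ?_ ?_, hk, ?_, ?_⟩
  · intro i; have := x1 (i + 1); simp only [hYd]; omega
  · intro i; have := xi i; have := xp i; simp only [hYd, hZd]; omega
  · intro n m; exact cS_add_le hk n m
  · intro n m
    have h5 := cS_add_le (N := N) hk (n + 1) m
    have := xp n
    simp only [hYd]
    rw [show n + m + 1 = n + 1 + m by ring]
    change X (n + 1 + m) ≤ X (n + 1) + _ at h5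
    omega
  · refine w Z z1 ?_
    intro i; have := x3 i; have := x3 (i + 1); have := xi i; have := xi (i + 3); simp only [hZd]
    rw [show i + 1 + 3 = i + 3 + 1 by ring] at *
    omega
  · intro i
    simp only
    rw [show i + k + 1 = i + 1 + k by ring, xk, xk, yk, yk]
    ext <;> push_cast <;> ring
  · intro j hj hjk
    by_contra hc
    push Not at hc
    have : k ∣ j := by
      refine per_of_counts xk ?_ (fun i => congrArg Prod.fst (hc i))
      have e : k = N + (N + l) := by omega
      rw [e, hN]
      simp
    exact absurd (Nat.le_of_dvd hj this) (by omega)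

lemma lower_coord {β : ℝ} (hβ : 1 < β) (hβ2 : β ≤ 2) {k N : ℕ} (hk : 0 < k) (hN : N ≤ k) {f : ℕ → ℕ}
    (hf : ∀ i, f i ≤ 1) (hper : ∀ i, f (i + k) = f i) (h0 : ∃ j, f j = 0)
    (hU : ∀ n, f n = 0 → val β (fun i => (f (n + 1 + i) : ℝ)) < 1)
    (hsum : N ≤ ∑ i ∈ Finset.range k, f i) : val β (cD N k) < 1 := by
  have hfr : ∀ i, 0 ≤ (f i : ℝ) ∧ (f i : ℝ) ≤ 1 := fun i => ⟨by positivity, by exact_mod_cast hf i⟩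
  obtain ⟨j, hj⟩ := h0
  have hall : ∀ m, val β (fun i => (f (j + 1 + m + i) : ℝ)) < 1 := by
    intro m
    induction m with
    | zero => exact hU j hj
    | succ m ih =>
      rcases Nat.eq_zero_or_pos (f (j + 1 + m)) with h | h
      · exact hU _ h
      · have h1 : f (j + 1 + m) = 1 := by have := hf (j + 1 + m); omega
        have := val_step hβ hfr (j + 1 + m)
        rw [h1] at this
        push_cast at this
        have e : j + 1 + (m + 1) = j + 1 + m + 1 := by ring
        rw [e]
        nlinarith
  set F : ℕ → ℕ := fun m => ∑ i ∈ Finset.range m, f i with hF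
  set M := F k with hM
  have hFk : ∀ i, F (i + k) = F i + M := by
    intro i
    induction i with
    | zero => simp [hF, hM]
    | succ i ih =>
      have a : F (i + 1 + k) = F (i + k) + f (i + k) := by
        rw [show i + 1 + k = i + k + 1 by ring]; exact Finset.sum_range_succ _ _
      have b : F (i + 1) = F i + f i := Finset.sum_range_succ _ _
      have := hper i
      omega
  set G : ℕ → ℤ := fun i => (k : ℤ) * F i - i * M with hG
  have hGk : Function.Periodic G k := by
    intro i; simp only [hG]; rw [hFk]; push_cast; ring
  obtain ⟨n, hn, hmin⟩ := Finset.exists_min_image (Finset.range k) G ⟨0, by simpa using hk⟩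
  have hmin' : ∀ i, G n ≤ G i := by
    intro i
    rw [← hGk.map_mod_nat i]
    exact hmin _ (by simpa using Nat.mod_lt _ hk)
  set n' := n + (j + 1) * k with hn'
  have hGn : G n' = G n := by
    have := hGk.nat_mul (j + 1) n
    simpa using this
  have hge : j + 1 ≤ n' := by nlinarith
  obtain ⟨m0, hm0⟩ := Nat.exists_eq_add_of_le hge
  refine lt_of_le_of_lt (val_le hβ (cD_bd hk hN) (fun i => hfr _) (fun m => ?_)) (hall m0)
  rw [← hm0, cD_sum hk]
  have e : F n' + ∑ i ∈ Finset.range m, f (n' + i) = F (n' + m) :=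
    (Finset.sum_range_add f n' m).symm
  have h1 : cS N k m ≤ ∑ i ∈ Finset.range m, f (n' + i) := by
    rw [cS_le hk]
    have h2 := hmin' (n' + m)
    rw [← hGn] at h2
    simp only [hG] at h2
    rw [← e] at h2
    have h3 : m * N ≤ m * M := Nat.mul_le_mul_left _ hsum
    zify at h3 ⊢
    push_cast at h2
    nlinarith
  exact_mod_cast h1

lemma lower {β : ℝ} (hβ : 1 < β) (hβ2 : β ≤ 2) {k l : ℕ} (h1 : 3 * l + 1 ≤ k) (h2 : 2 ≤ k)
    {d : ℕ → ℝ × ℝ} (hd : d ∈ Ufat β) (hp : SmallestPeriod d k) : val β (cD (l + 1) k) < 1 := by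
  have hU := (Ufat_iff hβ hd.1).1 hd
  have hex : ∀ i, ∃ a b : ℕ, d i = ((a : ℝ), (b : ℝ)) ∧ a + b ≤ 1 := by
    intro i
    rcases OmegaR_bd (hd.1 i) with h | h | h
    · exact ⟨0, 0, by simp [h], by norm_num⟩
    · exact ⟨1, 0, by simp [h], by norm_num⟩
    · exact ⟨0, 1, by simp [h], by norm_num⟩
  choose a b hab hle using hex
  obtain ⟨hk, hper, hmin⟩ := hp
  have pa : ∀ i, a (i + k) = a i := fun i => by
    have := congrArg Prod.fst (hper i); simp only [hab] at this; exact_mod_cast this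
  have pb : ∀ i, b (i + k) = b i := fun i => by
    have := congrArg Prod.snd (hper i); simp only [hab] at this; exact_mod_cast this
  obtain ⟨i0, hi0⟩ := hmin 1 one_pos (by omega)
  have ne : ¬ (a (i0 + 1) = a i0 ∧ b (i0 + 1) = b i0) := by
    rintro ⟨h, h'⟩; apply hi0; rw [hab, hab, h, h']
  have l0 := hle i0
  have l1 := hle (i0 + 1)
  have hc : ∀ i, (1 : ℝ) - a i - b i = ((1 - a i - b i : ℕ) : ℝ) := by
    intro i
    have := hle i
    rw [Nat.cast_sub (by omega), Nat.cast_sub (by omega)]; simp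
  have hs : (∑ i ∈ Finset.range k, a i) + (∑ i ∈ Finset.range k, b i) +
      ∑ i ∈ Finset.range k, (1 - a i - b i) = k := by
    rw [← Finset.sum_add_distrib, ← Finset.sum_add_distrib]
    rw [Finset.sum_congr rfl (g := fun _ => 1) (fun i _ => by have := hle i; omega)]
    simp
  simp only [hab] at hU
  simp only [hc] at hU
  have ex : ∀ f : ℕ → ℕ, (∀ i, f i ≤ 1) → (f i0 ≠ 1 ∨ f (i0 + 1) ≠ 1) → ∃ j, f j = 0 := by
    intro f hf h
    rcases h with h | h
    · exact ⟨i0, by have := hf i0; omega⟩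
    · exact ⟨i0 + 1, by have := hf (i0 + 1); omega⟩
  have hA : ∀ i, a i ≤ 1 := fun i => by have := hle i; omega
  have hB : ∀ i, b i ≤ 1 := fun i => by have := hle i; omega
  have hC : ∀ i, 1 - a i - b i ≤ 1 := fun i => by omega
  have : l + 1 ≤ (∑ i ∈ Finset.range k, a i) ∨ l + 1 ≤ (∑ i ∈ Finset.range k, b i) ∨
      l + 1 ≤ ∑ i ∈ Finset.range k, (1 - a i - b i) := by omega
  rcases this with h | h | h
  · exact lower_coord hβ hβ2 hk (by omega) hA pa (ex a hA (by omega))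
      (fun n hn => (hU n).1 (by exact_mod_cast hn)) h
  · exact lower_coord hβ hβ2 hk (by omega) hB pb (ex b hB (by omega))
      (fun n hn => (hU n).2.1 (by exact_mod_cast hn)) h
  · exact lower_coord hβ hβ2 hk (by omega) (f := fun i => 1 - a i - b i) hC
      (fun i => by simp only [pa, pb]) (ex _ hC (by omega))
      (fun n hn => (hU n).2.2 (by exact_mod_cast hn)) h

/-- Bases in which the mechanical word has value below one. -/
def Bset (N k : ℕ) : Set ℝ := {β : ℝ | β ∈ Set.Ioc (1 : ℝ) 2 ∧ val β (cD N k) < 1}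

lemma betaK_A {l : ℕ} (hl : 1 ≤ l) : betaK (3 * l + 1) = sInf (Bset (l + 1) (3 * l + 1)) := by
  unfold betaK Bset
  congr 1
  ext β
  constructor
  · rintro ⟨hβ, d, hd, hp⟩
    exact ⟨hβ, lower hβ.1 hβ.2 le_rfl (by omega) hd hp⟩
  · rintro ⟨hβ, hv⟩
    exact ⟨hβ, upperA hβ.1 hl hv⟩

lemma betaK_B (l : ℕ) : betaK (3 * l + 2) = sInf (Bset (l + 1) (3 * l + 2)) := by
  unfold betaK Bset
  congr 1
  ext β
  constructor
  · rintro ⟨hβ, d, hd, hp⟩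
    exact ⟨hβ, lower hβ.1 hβ.2 (by omega) (by omega) hd hp⟩
  · rintro ⟨hβ, hv⟩
    exact ⟨hβ, upperB hβ.1 hv⟩

/-- The limit sequence `101(001)^∞`. -/
def lD (i : ℕ) : ℕ := prefixPeriodic [1, 0, 1] [0, 0, 1] i

lemma lD_eq (i : ℕ) : lD i = if i = 0 ∨ i % 3 = 2 then 1 else 0 := by
  unfold lD prefixPeriodic
  rcases i with _ | _ | _ | i
  · simp
  · simp
  · simp
  · simp only [List.length_cons, List.length_nil]
    have h : (i + 1 + 1 + 1 - (0 + 1 + 1 + 1)) % (0 + 1 + 1 + 1) = i % 3 := by congr 1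
    rw [h, if_neg (by omega)]
    have h3 : i % 3 < 3 := Nat.mod_lt _ (by norm_num)
    have h4 : (i + 1 + 1 + 1) % 3 = i % 3 := by omega
    rw [h4]
    interval_cases h5 : i % 3 <;> simp

lemma lD_sum (m : ℕ) : ∑ j ∈ Finset.range m, lD j = if m = 0 then 0 else m / 3 + 1 := by
  induction m with
  | zero => simp
  | succ m ih =>
    rw [Finset.sum_range_succ, ih, lD_eq]
    split_ifs <;> omega

lemma lD_bd (i : ℕ) : 0 ≤ (lD i : ℝ) ∧ (lD i : ℝ) ≤ 1 := by
  rw [lD_eq]; split_ifs <;> simp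

lemma Bset_nonempty {N k : ℕ} (hk : 0 < k) (h2 : 2 * N ≤ k) (h3 : k < 3 * N) : (2 : ℝ) ∈ Bset N k := by
  refine ⟨⟨by norm_num, le_rfl⟩, val_two (cD_bd hk (by omega)) ?_⟩
  have a : cS N k 2 ≤ 1 := by rw [cS_le hk]; omega
  have b := cS_mono (N := N) hk 1 1
  have c := cS_third (N := N) hk (by omega) 1
  norm_num at b c
  have e1 : cS N k 1 = 1 := by omega
  have e2 : cS N k 2 = 1 := by omega
  simp [cD, e1, e2]

lemma Bset_gt {ba : ℝ} (hba : 1 < ba) (hv : val ba (fun i => (lD i : ℝ)) = 1) {N k : ℕ} (hk : 0 < k)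
    (h2 : 2 * N ≤ k) (h3 : k < 3 * N) {β : ℝ} (hβ : β ∈ Bset N k) : ba < β := by
  by_contra hc
  obtain ⟨⟨h1, _⟩, hlt⟩ := hβ
  have a := val_anti h1 (not_lt.1 hc) lD_bd
  have b : val β (fun i => (lD i : ℝ)) ≤ val β (cD N k) := by
    refine val_le h1 lD_bd (cD_bd hk (by omega)) (fun m => ?_)
    rw [cD_sum hk]
    have : ∑ j ∈ Finset.range m, lD j ≤ cS N k m := by
      rw [lD_sum]
      split_ifs with h
      · omega
      · by_contra hc
        have h4 : cS N k m ≤ m / 3 := by omega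
        rw [cS_le hk] at h4
        have h5 : m / 3 * 3 ≤ m := Nat.div_mul_le_self _ _
        have h6 : 3 * (m * N) ≤ m * k := by
          calc 3 * (m * N) ≤ 3 * (m / 3 * k) := Nat.mul_le_mul_left _ h4
            _ = (m / 3 * 3) * k := by ring
            _ ≤ m * k := Nat.mul_le_mul_right _ h5
        have h7 : m * k < m * (3 * N) := Nat.mul_lt_mul_of_pos_left h3 (by omega)
        nlinarith
    exact_mod_cast this
  linarith

lemma Bset_bdd (N k : ℕ) : BddBelow (Bset N k) := ⟨1, fun _ h => h.1.1.le⟩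

lemma strict {ba : ℝ} (hba : 1 < ba) (hv : val ba (fun i => (lD i : ℝ)) = 1) {N k N' k' : ℕ}
    (hk : 0 < k) (h2 : 2 * N ≤ k) (h3 : k < 3 * N)
    (hk' : 0 < k') (h2' : 2 * N' ≤ k') (hlt : N' * k < N * k') :
    sInf (Bset N' k') < sInf (Bset N k) := by
  set b := sInf (Bset N k) with hb
  have hne : (Bset N k).Nonempty := ⟨2, Bset_nonempty hk h2 h3⟩
  have hb1 : 1 < b := lt_of_lt_of_le hba (le_csInf hne fun x hx => (Bset_gt hba hv hk h2 h3 hx).le)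
  have hb2 : b ≤ 2 := csInf_le (Bset_bdd _ _) (Bset_nonempty hk h2 h3)
  have cb := cD_bd (N := N) hk (by omega)
  have cb' := cD_bd (N := N') hk' (by omega)
  have hle : val b (cD N k) ≤ 1 := by
    by_contra hc
    push Not at hc
    have := (val_cont cb hb1).eventually (lt_mem_nhds hc)
    obtain ⟨ε, hε, hball⟩ := Metric.eventually_nhds_iff.1 this
    obtain ⟨x, hx, hxl⟩ := exists_lt_of_csInf_lt hne (show sInf (Bset N k) < b + ε by rw [← hb]; linarith)
    have hbx : b ≤ x := csInf_le (Bset_bdd _ _) hx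
    have := hball (y := x) (by rw [Real.dist_eq, abs_of_nonneg] <;> linarith)
    have := hx.2
    linarith
  have hlt' : val b (cD N' k') < val b (cD N k) := by
    refine val_lt hb1 cb' cb (fun m => ?_) (k * k') ?_
    · rw [cD_sum hk, cD_sum hk']
      have : cS N' k' m ≤ cS N k m := by
        rw [cS_le hk']
        have h4 := cS_ge (N := N) (i := m) hk
        have h5 : (m * N') * k ≤ (cS N k m * k') * k := by
          calc (m * N') * k = m * (N' * k) := by ring
            _ ≤ m * (N * k') := Nat.mul_le_mul_left _ hlt.le
            _ = (m * N) * k' := by ring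
            _ ≤ (cS N k m * k) * k' := Nat.mul_le_mul_right _ h4
            _ = _ := by ring
        exact Nat.le_of_mul_le_mul_right h5 hk
      exact_mod_cast this
    · rw [cD_sum hk, cD_sum hk']
      have a1 : cS N' k' (k * k') ≤ N' * k := by rw [cS_le hk']; apply le_of_eq; ring
      have a2 : N * k' ≤ cS N k (k * k') := by
        have h4 := cS_ge (N := N) (i := k * k') hk
        refine Nat.le_of_mul_le_mul_right (c := k) ?_ hk
        calc N * k' * k = k * k' * N := by ring
          _ ≤ _ := h4
      exact_mod_cast (by omega : cS N' k' (k * k') < cS N k (k * k'))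
  have hfin : val b (cD N' k') < 1 := by linarith
  have := ((val_cont cb' hb1).eventually (gt_mem_nhds hfin)).and (lt_mem_nhds hb1)
  obtain ⟨ε, hε, hball⟩ := Metric.eventually_nhds_iff.1 this
  obtain ⟨v1, v2⟩ := hball (y := b - ε / 2) (by
    rw [Real.dist_eq, abs_of_nonpos] <;> linarith)
  have hmem : b - ε / 2 ∈ Bset N' k' := ⟨⟨v2, by linarith⟩, v1⟩
  have := csInf_le (Bset_bdd _ _) hmem
  linarith

lemma conv {ba : ℝ} (hba : 1 < ba) (hv : val ba (fun i => (lD i : ℝ)) = 1) (r : ℕ) (hr1 : 1 ≤ r)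
    (hr2 : r ≤ 2) : Filter.Tendsto (fun l : ℕ => sInf (Bset (l + 1) (3 * l + r))) Filter.atTop (nhds ba) := by
  have hcS : ∀ m, 1 ≤ m → ∀ l, m ≤ l → cS (l + 1) (3 * l + r) m = m / 3 + 1 := by
    intro m hm l hl
    have hk : 0 < 3 * l + r := by omega
    obtain ⟨q, t, ht, hq⟩ : ∃ q t, t < 3 ∧ m = 3 * q + t := ⟨m / 3, m % 3, Nat.mod_lt _ (by norm_num), by omega⟩
    have hq3 : m / 3 = q := by omega
    rw [hq3]
    apply le_antisymm
    · rw [cS_le hk, hq]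
      have : t * l ≤ 2 * l := Nat.mul_le_mul_right _ (by omega)
      nlinarith
    · by_contra hc
      have h4 : cS (l + 1) (3 * l + r) m ≤ q := by omega
      rw [cS_le hk, hq] at h4
      have : q * r ≤ q * 2 := Nat.mul_le_mul_left _ hr2
      rcases Nat.eq_zero_or_pos q with h | h
      · subst h; nlinarith
      · nlinarith
  have hval : ∀ β : ℝ, 1 < β → Filter.Tendsto (fun l : ℕ => val β (cD (l + 1) (3 * l + r))) Filter.atTop
      (nhds (val β (fun i => (lD i : ℝ)))) := by
    intro β hβ
    unfold val
    refine tendsto_tsum_of_dominated_convergence (bound := fun i => (β ^ (i + 1))⁻¹) (geoS hβ).summable ?_ ?_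
    · intro i
      refine tendsto_const_nhds.congr' ?_
      filter_upwards [Filter.eventually_ge_atTop (i + 1)] with l hl
      congr 1
      have e : cS (l + 1) (3 * l + r) i + lD i = cS (l + 1) (3 * l + r) (i + 1) := by
        rw [hcS (i + 1) (by omega) l hl, lD_eq]
        rcases Nat.eq_zero_or_pos i with h | h
        · subst h; rw [cS_zero (by omega)]; simp
        · rw [hcS i h l (by omega)]; split_ifs <;> omega
      have : (cS (l + 1) (3 * l + r) i : ℝ) + lD i = cS (l + 1) (3 * l + r) (i + 1) := by exact_mod_cast e
      unfold cD; linarith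
    · refine Filter.Eventually.of_forall fun l i => ?_
      have hb := cD_bd (N := l + 1) (k := 3 * l + r) (by omega) (by omega) i
      have h1 : (0 : ℝ) ≤ (β ^ (i + 1))⁻¹ := by positivity
      rw [Real.norm_of_nonneg (mul_nonneg h1 hb.1)]
      have := mul_le_mul_of_nonneg_left hb.2 h1
      linarith
  refine tendsto_order.2 ⟨fun x hx => ?_, fun x hx => ?_⟩
  · filter_upwards [Filter.eventually_ge_atTop 1] with l hl
    refine lt_of_lt_of_le hx (le_csInf ⟨2, Bset_nonempty (by omega) (by omega) (by omega)⟩ fun y hy => ?_)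
    exact (Bset_gt hba hv (by omega) (by omega) (by omega) hy).le
  · by_cases h2 : 2 < x
    · filter_upwards [Filter.eventually_ge_atTop 1] with l hl
      exact lt_of_le_of_lt (csInf_le (Bset_bdd _ _) (Bset_nonempty (by omega) (by omega) (by omega))) h2
    · obtain ⟨y, hy1, hy2⟩ := exists_between hx
      have h1 : val y (fun i => (lD i : ℝ)) < 1 := by
        rw [← hv]
        refine val_anti_lt hba hy1 lD_bd ?_
        rw [lD_eq]; simp
      filter_upwards [(hval y (by linarith)).eventually (gt_mem_nhds h1)] with l hl
      refine lt_of_le_of_lt (csInf_le (Bset_bdd _ _) ⟨⟨by linarith, by linarith⟩, hl⟩) hy2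

/-- The sequences ℓ ↦ β_{3ℓ+1} and ℓ ↦ β_{3ℓ+2} (ℓ ≥ 1) are strictly
decreasing and both converge to the base β_a ∈ (1,2] whose quasi-greedy
expansion of 1 is 101(001)^∞. -/
theorem stmt11 (ba : ℝ) (hba : ba ∈ Set.Ioc (1 : ℝ) 2)
    (hqg : FatSierpinski.IsQuasiGreedy ba
      (FatSierpinski.prefixPeriodic [1, 0, 1] [0, 0, 1])) :
    StrictAntiOn (fun l : ℕ => FatSierpinski.betaK (3 * l + 1)) (Set.Ici 1) ∧
    StrictAntiOn (fun l : ℕ => FatSierpinski.betaK (3 * l + 2)) (Set.Ici 1) ∧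
    Filter.Tendsto (fun l : ℕ => FatSierpinski.betaK (3 * l + 1))
      Filter.atTop (nhds ba) ∧
    Filter.Tendsto (fun l : ℕ => FatSierpinski.betaK (3 * l + 2))
      Filter.atTop (nhds ba) := by
  have h1 : 1 < ba := hba.1
  have hv : val ba (fun i => (lD i : ℝ)) = 1 := by
    rw [← hqg.2.2.1]
    unfold val
    congr 1; funext i
    rw [div_eq_mul_inv, mul_comm]; rfl
  refine ⟨?_, ?_, ?_, ?_⟩
  · intro l hl m hm hlm
    have hl : 1 ≤ l := hl
    have hm : 1 ≤ m := hm
    simp only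
    rw [betaK_A hl, betaK_A hm]
    exact strict h1 hv (by omega) (by omega) (by omega) (by omega) (by omega) (by nlinarith)
  · intro l hl m hm hlm
    have hl : 1 ≤ l := hl
    have hm : 1 ≤ m := hm
    simp only
    rw [betaK_B l, betaK_B m]
    exact strict h1 hv (by omega) (by omega) (by omega) (by omega) (by omega) (by nlinarith)
  · refine (conv h1 hv 1 le_rfl (by norm_num)).congr' ?_
    filter_upwards [Filter.eventually_ge_atTop 1] with l hl
    rw [betaK_A hl]
  · refine (conv h1 hv 2 (by norm_num) le_rfl).congr' ?_
    filter_upwards with l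
    rw [betaK_B l]

end FatSierpinski
end
end

section
/- For every k ∈ ℕ, β_k ≤ (1+√5)/2. Equivalently, for every β ∈ (1,2] with β > (1+√5)/2 and every k ∈ ℕ, the set 𝐔_β contains a sequence of smallest period k. -/
open Filter Set

noncomputable section

namespace FatSierpinski

/-- Value of the `n`-th tail of a real digit sequence in base `β`. -/
def tailVal (β : ℝ) (e : ℕ → ℝ) (n : ℕ) : ℝ := ∑' i : ℕ, (β ^ (i + 1))⁻¹ * e (n + i)

lemma summable_geo {β : ℝ} (hβ : 1 < β) : Summable fun i : ℕ => (β ^ (i + 1))⁻¹ := by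
  have h := (summable_geometric_of_lt_one (r := β⁻¹) (by positivity) (inv_lt_one_of_one_lt₀ hβ))
  have h2 := (summable_nat_add_iff 1).2 h
  simpa [inv_pow] using h2

lemma tsum_geo {β : ℝ} (hβ : 1 < β) : ∑' i : ℕ, (β ^ (i + 1))⁻¹ = 1 / (β - 1) := by
  have h := (tsum_geometric_of_lt_one (r := β⁻¹) (by positivity) (inv_lt_one_of_one_lt₀ hβ))
  have h1 : ∀ i : ℕ, (β ^ (i + 1))⁻¹ = β⁻¹ ^ i * β⁻¹ := fun i => by
    rw [← inv_pow, pow_succ]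
  simp_rw [h1]
  rw [tsum_mul_right, h]
  have : β - 1 ≠ 0 := by linarith
  have : β ≠ 0 := by linarith
  have h3 : 1 - β⁻¹ = (β - 1) / β := by field_simp
  rw [h3]
  field_simp

lemma summable_val {β : ℝ} (hβ : 1 < β) {e : ℕ → ℝ} (h0 : ∀ i, 0 ≤ e i) (h1 : ∀ i, e i ≤ 1)
    (n : ℕ) : Summable fun i : ℕ => (β ^ (i + 1))⁻¹ * e (n + i) := by
  have hp : ∀ i : ℕ, 0 ≤ (β ^ (i + 1))⁻¹ := fun i => by positivity
  exact Summable.of_nonneg_of_le (fun i => mul_nonneg (hp i) (h0 _))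
    (fun i => mul_le_of_le_one_right (hp i) (h1 _)) (summable_geo hβ)

lemma tailVal_nonneg {β : ℝ} (hβ : 1 < β) {e : ℕ → ℝ} (h0 : ∀ i, 0 ≤ e i) (n : ℕ) :
    0 ≤ tailVal β e n :=
  tsum_nonneg fun i => mul_nonneg (by positivity) (h0 _)

lemma tailVal_rec {β : ℝ} (hβ : 1 < β) {e : ℕ → ℝ} (h0 : ∀ i, 0 ≤ e i) (h1 : ∀ i, e i ≤ 1)
    (n : ℕ) : β * tailVal β e n = e n + tailVal β e (n + 1) := by
  have hb : β ≠ 0 := by linarith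
  unfold tailVal
  rw [(summable_val hβ h0 h1 n).tsum_eq_zero_add, mul_add, ← tsum_mul_left]
  congr 1
  · simp [hb]
  · refine tsum_congr fun i => ?_
    rw [show n + (i + 1) = n + 1 + i by ring, pow_succ β (i + 1)]
    field_simp

/-- Without two consecutive ones, tail values are below `1` for `β > φ`. -/
lemma tailVal_lt {β : ℝ} (hβ : 1 < β) (hφ : β + 1 < β ^ 2) {e : ℕ → ℝ} (h0 : ∀ i, 0 ≤ e i)
    (h1 : ∀ i, e i ≤ 1) (hadj : ∀ i, e i + e (i + 1) ≤ 1) (n : ℕ) : tailVal β e n < 1 := by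
  have hr := tailVal_rec hβ h0 h1 n
  have hsum : tailVal β e n + tailVal β e (n + 1) ≤ 1 / (β - 1) := by
    rw [← tsum_geo hβ]
    unfold tailVal
    rw [← (summable_val hβ h0 h1 n).tsum_add (summable_val hβ h0 h1 (n + 1))]
    refine Summable.tsum_le_tsum (fun i => ?_)
      ((summable_val hβ h0 h1 n).add (summable_val hβ h0 h1 (n + 1))) (summable_geo hβ)
    rw [← mul_add, show n + 1 + i = n + i + 1 by ring]
    exact mul_le_of_le_one_right (by positivity) (hadj _)
  have h2 : (1 + β) * tailVal β e n ≤ 1 / (β - 1) + 1 := by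
    have := h1 n
    linarith
  have hb : 0 < β - 1 := by linarith
  have h3 : 1 / (β - 1) < β := by
    rw [div_lt_iff₀ hb]
    nlinarith
  nlinarith

lemma tailVal_compl {β : ℝ} (hβ : 1 < β) {d : ℕ → ℝ × ℝ} (hx0 : ∀ i, 0 ≤ (d i).1)
    (hx1 : ∀ i, (d i).1 ≤ 1) (hy0 : ∀ i, 0 ≤ (d i).2) (hy1 : ∀ i, (d i).2 ≤ 1) (n : ℕ) :
    tailVal β (fun i => 1 - (d i).1 - (d i).2) n =
      1 / (β - 1) - tailVal β (fun i => (d i).1) n - tailVal β (fun i => (d i).2) n := by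
  rw [← tsum_geo hβ]
  unfold tailVal
  have sx := summable_val hβ (e := fun i => (d i).1) hx0 hx1 n
  have sy := summable_val hβ (e := fun i => (d i).2) hy0 hy1 n
  rw [← (summable_geo hβ).tsum_sub sx, ← ((summable_geo hβ).sub sx).tsum_sub sy]
  refine tsum_congr fun i => ?_
  ring

lemma omega_bounds {c : ℝ × ℝ} (hc : c ∈ OmegaR) :
    0 ≤ c.1 ∧ c.1 ≤ 1 ∧ 0 ≤ c.2 ∧ c.2 ≤ 1 ∧ 0 ≤ 1 - c.1 - c.2 ∧ 1 - c.1 - c.2 ≤ 1 := by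
  rcases hc with rfl | rfl | rfl <;> norm_num

lemma tsum_eq_pair {β : ℝ} (hβ : 1 < β) {d : ℕ → ℝ × ℝ} (hd : ∀ i, d i ∈ OmegaR) (n : ℕ) :
    ∑' i : ℕ, (β ^ (i + 1))⁻¹ • d (n + i) =
      (tailVal β (fun i => (d i).1) n, tailVal β (fun i => (d i).2) n) := by
  have sx := summable_val hβ (e := fun i => (d i).1) (fun i => (omega_bounds (hd i)).1)
    (fun i => (omega_bounds (hd i)).2.1) n
  have sy := summable_val hβ (e := fun i => (d i).2) (fun i => (omega_bounds (hd i)).2.2.1)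
    (fun i => (omega_bounds (hd i)).2.2.2.1) n
  exact (sx.hasSum.prodMk sy.hasSum).tsum_eq

/-- The hull is contained in the closed triangle. -/
lemma delta_sub {β : ℝ} (hβ : 1 < β) {x : ℝ × ℝ} (hx : x ∈ Delta β) :
    0 ≤ x.1 ∧ 0 ≤ x.2 ∧ x.1 + x.2 ≤ 1 / (β - 1) := by
  have hconv : Convex ℝ {x : ℝ × ℝ | 0 ≤ x.1 ∧ 0 ≤ x.2 ∧ x.1 + x.2 ≤ 1 / (β - 1)} := by
    rintro u ⟨hu1, hu2, hu3⟩ v ⟨hv1, hv2, hv3⟩ a b ha hb hab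
    refine ⟨?_, ?_, ?_⟩
    · simp only [Prod.fst_add, Prod.smul_fst, smul_eq_mul]; positivity
    · simp only [Prod.snd_add, Prod.smul_snd, smul_eq_mul]; positivity
    · simp only [Prod.fst_add, Prod.smul_fst, Prod.snd_add, Prod.smul_snd, smul_eq_mul]
      have h1 := mul_le_mul_of_nonneg_left hu3 ha
      have h2 := mul_le_mul_of_nonneg_left hv3 hb
      have h3 : a * (1 / (β - 1)) + b * (1 / (β - 1)) = 1 / (β - 1) := by
        rw [← add_mul, hab, one_mul]
      linarith
  refine convexHull_min ?_ hconv hx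
  rintro y ⟨d, hd, rfl⟩
  have h := tsum_eq_pair hβ hd 0
  simp only [zero_add] at h
  rw [h]
  have hb := fun i => omega_bounds (hd i)
  have hc := tailVal_compl hβ (d := d) (fun i => (hb i).1) (fun i => (hb i).2.1)
    (fun i => (hb i).2.2.1) (fun i => (hb i).2.2.2.1) 0
  have hz := tailVal_nonneg hβ (e := fun i => 1 - (d i).1 - (d i).2)
    (fun i => (hb i).2.2.2.2.1) 0
  refine ⟨tailVal_nonneg hβ (fun i => (hb i).1) 0, tailVal_nonneg hβ (fun i => (hb i).2.2.1) 0, ?_⟩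
  simp only
  linarith

/-- Criterion for univoque codings. -/
lemma mem_Ufat {β : ℝ} (hβ : 1 < β) {d : ℕ → ℝ × ℝ} (hd : ∀ i, d i ∈ OmegaR)
    (hx : ∀ n, (d n).1 = 0 → tailVal β (fun i => (d i).1) (n + 1) < 1)
    (hy : ∀ n, (d n).2 = 0 → tailVal β (fun i => (d i).2) (n + 1) < 1)
    (hz : ∀ n, 1 - (d n).1 - (d n).2 = 0 →
      tailVal β (fun i => 1 - (d i).1 - (d i).2) (n + 1) < 1) : d ∈ Ufat β := by
  have hb := fun i => omega_bounds (hd i)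
  refine ⟨hd, fun n => ?_⟩
  rw [tsum_eq_pair hβ hd n]
  have rx := tailVal_rec hβ (e := fun i => (d i).1) (fun i => (hb i).1) (fun i => (hb i).2.1) n
  have ry := tailVal_rec hβ (e := fun i => (d i).2) (fun i => (hb i).2.2.1)
    (fun i => (hb i).2.2.2.1) n
  have rz := tailVal_rec hβ (e := fun i => 1 - (d i).1 - (d i).2) (fun i => (hb i).2.2.2.2.1)
    (fun i => (hb i).2.2.2.2.2) n
  have hc := tailVal_compl hβ (d := d) (fun i => (hb i).1) (fun i => (hb i).2.1)
    (fun i => (hb i).2.2.1) (fun i => (hb i).2.2.2.1) n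
  have hxn := hx n
  have hyn := hy n
  have hzn := hz n
  generalize tailVal β (fun i => 1 - (d i).1 - (d i).2) n = Z at *
  generalize tailVal β (fun i => (d i).1) n = X at *
  generalize tailVal β (fun i => (d i).2) n = Y at *
  have hβ0 : β ≠ 0 := by linarith
  have hβ1 : β - 1 ≠ 0 := by linarith
  have key : ∀ c ∈ OmegaR, (X, Y) ∈ fmap β c '' Delta β → c = d n := by
    rintro c hcΩ ⟨u, hu, huv⟩
    obtain ⟨u1, u2, u3⟩ := delta_sub hβ hu
    have e1 : u.1 + c.1 = β * X := by
      have := congrArg Prod.fst huv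
      simp only [fmap, Prod.smul_fst, Prod.fst_add, smul_eq_mul] at this
      rw [← this]; field_simp
    have e2 : u.2 + c.2 = β * Y := by
      have := congrArg Prod.snd huv
      simp only [fmap, Prod.smul_snd, Prod.snd_add, smul_eq_mul] at this
      rw [← this]; field_simp
    have e3 : β * Z = β / (β - 1) - β * X - β * Y := by
      rw [hc]; ring
    have e4 : β / (β - 1) = 1 + 1 / (β - 1) := by field_simp; ring
    have hdn := hd n
    clear huv hb hx hy hz hd
    generalize tailVal β (fun i => 1 - (d i).1 - (d i).2) (n + 1) = Z' at *
    generalize tailVal β (fun i => (d i).1) (n + 1) = X' at *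
    generalize tailVal β (fun i => (d i).2) (n + 1) = Y' at *
    generalize d n = v at *
    rcases hcΩ with rfl | rfl | rfl <;> rcases hdn with rfl | rfl | rfl <;>
      first
      | rfl
      | (exfalso; norm_num at *; linarith)
  intro hmem
  simp only [Ofat, mem_iUnion] at hmem
  obtain ⟨c, hcΩ, c', hcΩ', hne, h1, h2⟩ := hmem
  exact hne ((key c hcΩ h1).trans (key c' hcΩ' h2).symm)

/-- The periodic sequence `(AB)^m C` or `(AB)^m A C` of length `k`. -/
def perSeq (k : ℕ) (i : ℕ) : ℝ × ℝ :=
  if i % k = k - 1 then (0, 0) else if (i % k) % 2 = 0 then (1, 0) else (0, 1)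

lemma perSeq_mem (k i : ℕ) : perSeq k i ∈ OmegaR := by
  unfold perSeq OmegaR
  split_ifs <;> simp

lemma perSeq_smallest (k : ℕ) (hk : 1 ≤ k) : SmallestPeriod (perSeq k) k := by
  refine ⟨hk, fun i => by simp [perSeq], fun j hj hjk => ⟨k - 1, ?_⟩⟩
  have h1 : (k - 1) % k = k - 1 := Nat.mod_eq_of_lt (by omega)
  have h2 : (k - 1 + j) % k = j - 1 := by
    rw [show k - 1 + j = (j - 1) + k by omega, Nat.add_mod_right]
    exact Nat.mod_eq_of_lt (by omega)
  have h3 : ¬ (j - 1 = k - 1) := by omega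
  unfold perSeq
  rw [h1, h2, if_neg h3, if_pos rfl]
  split_ifs <;> simp

lemma perSeq_adj (k : ℕ) (hk : 2 ≤ k) (i : ℕ) : perSeq k i ≠ perSeq k (i + 1) := by
  have hlt := Nat.mod_lt i (show k > 0 by omega)
  by_cases h : i % k = k - 1
  · have h2 : (i + 1) % k = 0 := by
      rw [Nat.add_mod, h, Nat.mod_eq_of_lt (show 1 < k by omega),
        show k - 1 + 1 = k by omega, Nat.mod_self]
    unfold perSeq
    rw [h2, if_pos h, if_neg (by omega)]
    simp
  · have h2 : (i + 1) % k = i % k + 1 := by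
      rw [Nat.add_mod, Nat.mod_eq_of_lt (show 1 < k by omega), Nat.mod_eq_of_lt]
      omega
    unfold perSeq
    rw [h2, if_neg h]
    split_ifs <;> first | omega | simp

lemma omega_adj {c c' : ℝ × ℝ} (hc : c ∈ OmegaR) (hc' : c' ∈ OmegaR) (h : c ≠ c') :
    c.1 + c'.1 ≤ 1 ∧ c.2 + c'.2 ≤ 1 ∧ (1 - c.1 - c.2) + (1 - c'.1 - c'.2) ≤ 1 := by
  rcases hc with rfl | rfl | rfl <;> rcases hc' with rfl | rfl | rfl <;>
    first | exact absurd rfl h | norm_num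

lemma main_exists (β : ℝ) (hβ : β ∈ Set.Ioc (1 : ℝ) 2) (hφ : (1 + Real.sqrt 5) / 2 < β)
    (k : ℕ) (hk : 1 ≤ k) : ∃ d ∈ Ufat β, SmallestPeriod d k := by
  have h1 := hβ.1
  have hquad : β + 1 < β ^ 2 := by
    have hs := Real.sq_sqrt (show (0 : ℝ) ≤ 5 by norm_num)
    have hs0 := Real.sqrt_nonneg 5
    nlinarith
  refine ⟨perSeq k, ?_, perSeq_smallest k hk⟩
  have hd := perSeq_mem k
  have hb := fun i => omega_bounds (hd i)
  rcases Nat.lt_or_ge k 2 with h | h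
  · obtain rfl : k = 1 := by omega
    have hp : ∀ i, perSeq 1 i = (0, 0) := fun i => by simp [perSeq, Nat.mod_one]
    refine mem_Ufat h1 hd ?_ ?_ ?_ <;> intro n hn
    · simp [tailVal, hp]
    · simp [tailVal, hp]
    · rw [hp] at hn
      norm_num at hn
  · have ha := fun i => omega_adj (hd i) (hd (i + 1)) (perSeq_adj k h i)
    exact mem_Ufat h1 hd
      (fun n _ => tailVal_lt h1 hquad (fun i => (hb i).1) (fun i => (hb i).2.1)
        (fun i => (ha i).1) _)
      (fun n _ => tailVal_lt h1 hquad (fun i => (hb i).2.2.1) (fun i => (hb i).2.2.2.1)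
        (fun i => (ha i).2.1) _)
      (fun n _ => tailVal_lt h1 hquad (fun i => (hb i).2.2.2.2.1) (fun i => (hb i).2.2.2.2.2)
        (fun i => (ha i).2.2) _)

/-- β_k ≤ (1+√5)/2 for every k ≥ 1; equivalently, for every β ∈ (1,2] with
β > (1+√5)/2 and every k ≥ 1, 𝐔_β contains a sequence of smallest period k. -/
theorem stmt13 :
    (∀ k : ℕ, 1 ≤ k → FatSierpinski.betaK k ≤ (1 + Real.sqrt 5) / 2) ∧
    ∀ β ∈ Set.Ioc (1 : ℝ) 2, (1 + Real.sqrt 5) / 2 < β → ∀ k : ℕ, 1 ≤ k →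
      ∃ d ∈ FatSierpinski.Ufat β, FatSierpinski.SmallestPeriod d k := by
  refine ⟨fun k hk => ?_, main_exists⟩
  have hs : Real.sqrt 5 < 3 := by
    rw [Real.sqrt_lt' (by norm_num)]; norm_num
  have hs1 : 1 < Real.sqrt 5 := by
    rw [Real.lt_sqrt (by norm_num)]; norm_num
  refine le_of_forall_gt_imp_ge_of_dense fun b hb => ?_
  have hm : (1 + Real.sqrt 5) / 2 < min b 2 := lt_min hb (by linarith)
  have hI : min b 2 ∈ Set.Ioc (1 : ℝ) 2 := ⟨by linarith, min_le_right _ _⟩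
  refine le_trans (csInf_le ⟨1, fun x hx => hx.1.1.le⟩ ?_) (min_le_left b 2)
  exact ⟨hI, main_exists _ hI hm k hk⟩

end FatSierpinski
end
end
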